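/- Let K ≥ 1 and let A be a nonempty subset of F_2^n satisfying |A + A| ≤ K·|A|. Then for every real ε > 0, every positive integer t, and every set B ⊆ F_2^n there exists a set X ⊆ F_2^n with the following properties: (1) X is contained in an affine shift of A, i.e. there exists c ∈ F_2^n with X ⊆ c + A; (2) |X| ≥ |A|/(2·K^{t−1}); (3) for every positive integer ℓ, all x₁, …, x_ℓ ∈ X, and every nonempty subset S ⊆ F_2^n, Pr_{y∈S}[ |ρ_{A→B}(y) − ρ_{A→B}(y + x₁ + ⋯ + x_ℓ)| ≤ 2εℓ ] ≥ 1 − 8ℓ·(|A+B|/|S|)·exp(−2ε²t). -/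

import Mathlib

open scoped Classical Pointwise

/-- The measure of additive containment: `ρ_{A→B}(y) = |{a ∈ A : y + a ∈ B}| / |A|`. -/
noncomputable def rhoMeas {n : ℕ} (A B : Finset (Fin n → ZMod 2)) (y : Fin n → ZMod 2) : ℝ :=
  ((A.filter fun a => y + a ∈ B).card : ℝ) / A.card

/-- `Pr_{y ∈ S}[P y] = |{y ∈ S : P y}| / |S|`. -/
noncomputable def prOver {n : ℕ} (S : Finset (Fin n → ZMod 2))
    (P : (Fin n → ZMod 2) → Prop) : ℝ :=
  ((S.filter fun y => P y).card : ℝ) / S.card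

open Real

lemma ap_mgf {n : ℕ} (A : Finset (Fin n → ZMod 2)) (hA : A.Nonempty)
    (f : (Fin n → ZMod 2) → ℝ) (hf : ∀ a, f a ∈ Set.Icc (0:ℝ) 1) (p : ℝ)
    (hp : ∑ a ∈ A, f a = p * A.card) (s : ℝ) :
    ∑ a ∈ A, exp (s * (f a - p)) ≤ A.card * exp (s ^ 2 / 8) := by
  let _ : MeasurableSpace (Fin n → ZMod 2) := ⊤
  have hc : (0:ℝ) < A.card := by exact_mod_cast hA.card_pos
  let μ := (PMF.uniformOfFinset A hA).toMeasure
  have key : ∀ g : (Fin n → ZMod 2) → ℝ, ∫ x, g x ∂μ = (∑ a ∈ A, g a) / A.card := by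
    intro g
    rw [PMF.integral_eq_sum]
    rw [Finset.sum_div, ← Finset.sum_subset (Finset.subset_univ A)]
    · refine Finset.sum_congr rfl fun a ha => ?_
      rw [PMF.uniformOfFinset_apply_of_mem hA ha]
      simp [div_eq_inv_mul]
    · intro a _ ha
      rw [PMF.uniformOfFinset_apply_of_notMem hA ha]
      simp
  have h := ProbabilityTheory.hasSubgaussianMGF_of_mem_Icc (μ := μ) (X := f) (a := 0) (b := 1)
    (measurable_from_top.aemeasurable) (Filter.Eventually.of_forall hf)
  have h2 := h.mgf_le s
  unfold ProbabilityTheory.mgf at h2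
  rw [key, key, hp, mul_div_cancel_right₀ _ hc.ne', div_le_iff₀ hc] at h2
  refine h2.trans (le_of_eq ?_)
  rw [mul_comm]
  congr 2
  norm_num
  ring

lemma ap_tail {n : ℕ} (A : Finset (Fin n → ZMod 2)) (hA : A.Nonempty)
    (f : (Fin n → ZMod 2) → ℝ) (hf : ∀ a, f a ∈ Set.Icc (0:ℝ) 1) (p : ℝ)
    (hp : ∑ a ∈ A, f a = p * A.card) (t : ℕ) (ε : ℝ) (hε : 0 < ε) :
    (((Fintype.piFinset fun _ : Fin t => A).filter
      fun a => t * ε < ∑ i, (f (a i) - p)).card : ℝ) ≤ (A.card : ℝ) ^ t * exp (-2 * ε ^ 2 * t) := by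
  have h1 : ∑ a ∈ Fintype.piFinset (fun _ : Fin t => A), exp (4 * ε * ∑ i, (f (a i) - p))
      ≤ (A.card * exp ((4 * ε) ^ 2 / 8)) ^ t := by
    have : ∀ a : Fin t → (Fin n → ZMod 2), exp (4 * ε * ∑ i, (f (a i) - p))
        = ∏ i, exp (4 * ε * (f (a i) - p)) := by
      intro a; rw [Finset.mul_sum, exp_sum]
    simp_rw [this]
    rw [← Finset.prod_univ_sum (fun _ : Fin t => A) (fun _ a => exp (4 * ε * (f a - p)))]
    rw [Finset.prod_const, Finset.card_univ, Fintype.card_fin]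
    exact pow_le_pow_left₀ (Finset.sum_nonneg fun _ _ => (exp_pos _).le) (ap_mgf A hA f hf p hp _) t
  set F := (Fintype.piFinset fun _ : Fin t => A).filter fun a => t * ε < ∑ i, (f (a i) - p)
  have h2 : (F.card : ℝ) * exp (4 * ε * (t * ε)) ≤ (A.card * exp ((4 * ε) ^ 2 / 8)) ^ t := by
    have h3 : F.card • exp (4 * ε * (t * ε)) ≤ ∑ a ∈ F, exp (4 * ε * ∑ i, (f (a i) - p)) := by
      apply Finset.card_nsmul_le_sum
      intro a ha
      have := (Finset.mem_filter.1 ha).2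
      exact exp_le_exp.2 (mul_le_mul_of_nonneg_left this.le (by positivity))
    have h4 : ∑ a ∈ F, exp (4 * ε * ∑ i, (f (a i) - p)) ≤
        ∑ a ∈ Fintype.piFinset (fun _ : Fin t => A), exp (4 * ε * ∑ i, (f (a i) - p)) :=
      Finset.sum_le_sum_of_subset_of_nonneg (Finset.filter_subset _ _)
        fun _ _ _ => (exp_pos _).le
    have h5 := (h3.trans h4).trans h1
    simpa only [nsmul_eq_mul] using h5
  rw [← le_div_iff₀ (exp_pos _)] at h2
  refine h2.trans (le_of_eq ?_)
  rw [mul_pow, ← exp_nat_mul, mul_div_assoc, ← exp_sub]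
  congr 2
  ring

lemma ap_two {n : ℕ} (A : Finset (Fin n → ZMod 2)) (hA : A.Nonempty)
    (f : (Fin n → ZMod 2) → ℝ) (hf : ∀ a, f a ∈ Set.Icc (0:ℝ) 1) (p : ℝ)
    (hp : ∑ a ∈ A, f a = p * A.card) (t : ℕ) (ht : 0 < t) (ε : ℝ) (hε : 0 < ε) :
    (((Fintype.piFinset fun _ : Fin t => A).filter
      fun a => ε < |(∑ i, f (a i)) / t - p|).card : ℝ) ≤
      2 * ((A.card : ℝ) ^ t * exp (-2 * ε ^ 2 * t)) := by
  have ht' : (0:ℝ) < t := by exact_mod_cast ht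
  have h1 := ap_tail A hA f hf p hp t ε hε
  have h2 := ap_tail A hA (fun a => 1 - f a)
    (fun a => ⟨by linarith [(hf a).2], by linarith [(hf a).1]⟩) (1 - p)
    (by rw [Finset.sum_sub_distrib, hp]; simp; ring) t ε hε
  set F1 := (Fintype.piFinset fun _ : Fin t => A).filter fun a => t * ε < ∑ i, (f (a i) - p)
  set F2 := (Fintype.piFinset fun _ : Fin t => A).filter
    fun a => t * ε < ∑ i, (1 - f (a i) - (1 - p))
  have hsub : ((Fintype.piFinset fun _ : Fin t => A).filter
      fun a => ε < |(∑ i, f (a i)) / t - p|) ⊆ F1 ∪ F2 := by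
    intro a ha
    rw [Finset.mem_filter] at ha
    obtain ⟨ha, hb⟩ := ha
    have e1 : ∑ i, (f (a i) - p) = t * ((∑ i, f (a i)) / t - p) := by
      rw [Finset.sum_sub_distrib]; simp; field_simp
    have e2 : ∑ i, (1 - f (a i) - (1 - p)) = t * (-((∑ i, f (a i)) / t - p)) := by
      rw [mul_neg, ← e1, ← Finset.sum_neg_distrib]
      exact Finset.sum_congr rfl fun _ _ => by ring
    rw [Finset.mem_union, Finset.mem_filter, Finset.mem_filter, e1, e2]
    rcases lt_abs.1 hb with h | h
    · exact Or.inl ⟨ha, mul_lt_mul_of_pos_left h ht'⟩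
    · exact Or.inr ⟨ha, mul_lt_mul_of_pos_left h ht'⟩
  have h3 : ((Finset.card ((Fintype.piFinset fun _ : Fin t => A).filter
      fun a => ε < |(∑ i, f (a i)) / t - p|) : ℕ) : ℝ) ≤ F1.card + F2.card := by
    exact_mod_cast (Finset.card_le_card hsub).trans (Finset.card_union_le _ _)
  linarith

/-- the set of points where the empirical density is far from the true one -/
noncomputable def apBad {n : ℕ} (A B : Finset (Fin n → ZMod 2)) (ε : ℝ) (t : ℕ)
    (a : Fin t → (Fin n → ZMod 2)) : Finset (Fin n → ZMod 2) :=
  Finset.univ.filter fun y =>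
    ε < |(∑ i, (if y + a i ∈ B then (1:ℝ) else 0)) / t - rhoMeas A B y|

lemma ap_char {n : ℕ} (x : Fin n → ZMod 2) : x + x = 0 := by
  funext i
  exact CharTwo.add_self_eq_zero _

lemma ap_count {n : ℕ} (A B : Finset (Fin n → ZMod 2)) (hA : A.Nonempty)
    (t : ℕ) (ht : 0 < t) (ε : ℝ) (hε : 0 < ε) :
    ∑ a ∈ Fintype.piFinset (fun _ : Fin t => A), ((apBad A B ε t a).card : ℝ) ≤
      (A + B).card * (2 * ((A.card : ℝ) ^ t * exp (-2 * ε ^ 2 * t))) := by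
  have hc : (0:ℝ) < A.card := by exact_mod_cast hA.card_pos
  set P := Fintype.piFinset (fun _ : Fin t => A) with hP
  have h1 : ∀ a ∈ P, apBad A B ε t a = (A + B).filter fun y =>
      ε < |(∑ i, (if y + a i ∈ B then (1:ℝ) else 0)) / t - rhoMeas A B y| := by
    intro a ha
    rw [hP, Fintype.mem_piFinset] at ha
    ext y
    simp only [apBad, Finset.mem_filter, Finset.mem_univ, true_and]
    refine ⟨fun h => ⟨?_, h⟩, fun h => h.2⟩
    by_contra hy
    have hn : ∀ b ∈ A, y + b ∉ B := by
      intro b hb hyb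
      apply hy
      rw [Finset.mem_add]
      refine ⟨b, hb, y + b, hyb, ?_⟩
      rw [add_comm y b, ← add_assoc, ap_char, zero_add]
    have e1 : ∑ i, (if y + a i ∈ B then (1:ℝ) else 0) = 0 :=
      Finset.sum_eq_zero fun i _ => if_neg (hn _ (ha i))
    have e2 : rhoMeas A B y = 0 := by
      unfold rhoMeas
      rw [Finset.filter_false_of_mem hn]
      simp
    rw [e1, e2] at h
    simp at h
    linarith
  have h2 : ∑ a ∈ P, ((apBad A B ε t a).card : ℝ) = ∑ y ∈ A + B, ((P.filter fun a =>
      ε < |(∑ i, (if y + a i ∈ B then (1:ℝ) else 0)) / t - rhoMeas A B y|).card : ℝ) := by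
    rw [Finset.sum_congr rfl fun a ha => by rw [h1 a ha]]
    simp only [Finset.card_filter, Nat.cast_sum]
    rw [Finset.sum_comm]
  rw [h2, ← nsmul_eq_mul]
  apply Finset.sum_le_card_nsmul
  intro y _
  refine ap_two A hA (fun a => if y + a ∈ B then (1:ℝ) else 0) ?_ (rhoMeas A B y) ?_ t ht ε hε
  · intro a
    split_ifs <;> simp
  · unfold rhoMeas
    rw [div_mul_cancel₀ _ hc.ne', Finset.sum_boole]

lemma ap_good {n : ℕ} (A B : Finset (Fin n → ZMod 2)) (hA : A.Nonempty)
    (t : ℕ) (ht : 0 < t) (ε : ℝ) (hε : 0 < ε) :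
    (A.card : ℝ) ^ t / 2 ≤ (((Fintype.piFinset (fun _ : Fin t => A)).filter fun a =>
      ((apBad A B ε t a).card : ℝ) ≤ 4 * (A + B).card * exp (-2 * ε ^ 2 * t)).card : ℝ) := by
  have h := ap_count A B hA t ht ε hε
  set P := Fintype.piFinset (fun _ : Fin t => A) with hP
  set M := 4 * ((A + B).card : ℝ) * exp (-2 * ε ^ 2 * t) with hM
  have hM0 : 0 ≤ M := by positivity
  have hPc : (P.card : ℝ) = (A.card : ℝ) ^ t := by
    rw [hP, Fintype.card_piFinset]; simp
  set N := P.filter fun a => ¬ ((apBad A B ε t a).card : ℝ) ≤ M with hN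
  have hsplit := Finset.card_filter_add_card_filter_not (s := P)
    (fun a => ((apBad A B ε t a).card : ℝ) ≤ M)
  have hsplit' : ((P.filter fun a => ((apBad A B ε t a).card : ℝ) ≤ M).card : ℝ) + N.card
      = (A.card : ℝ) ^ t := by
    rw [← hPc]; exact_mod_cast hsplit
  have hN2 : (N.card : ℝ) ≤ (A.card : ℝ) ^ t / 2 := by
    have h3 : N.card • M ≤ ∑ a ∈ N, ((apBad A B ε t a).card : ℝ) := by
      apply Finset.card_nsmul_le_sum
      intro a ha
      exact (not_le.1 (Finset.mem_filter.1 ha).2).le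
    have h4 : ∑ a ∈ N, ((apBad A B ε t a).card : ℝ) ≤ ∑ a ∈ P, ((apBad A B ε t a).card : ℝ) :=
      Finset.sum_le_sum_of_subset_of_nonneg (Finset.filter_subset _ _)
        fun _ _ _ => Nat.cast_nonneg _
    rcases hM0.eq_or_lt with h0 | h0
    · have hab : ((A + B).card : ℝ) = 0 := by
        have := exp_pos (-2 * ε ^ 2 * t)
        rcases mul_eq_zero.1 (hM.symm.trans h0.symm) with h6 | h6
        · linarith
        · exact absurd h6 this.ne'
      rw [hab, zero_mul] at h
      have hem : N = ∅ := by
        rw [Finset.eq_empty_iff_forall_notMem]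
        intro a ha
        have hs := Finset.single_le_sum (f := fun a => ((apBad A B ε t a).card : ℝ))
          (fun _ _ => Nat.cast_nonneg _) ha
        have := (not_le.1 (Finset.mem_filter.1 ha).2)
        linarith
      rw [hem, Finset.card_empty, Nat.cast_zero]
      exact div_nonneg (pow_nonneg (Nat.cast_nonneg _) _) zero_le_two
    · rw [nsmul_eq_mul] at h3
      have h5 : (N.card : ℝ) * M ≤ (A.card : ℝ) ^ t / 2 * M := by
        refine (h3.trans (h4.trans h)).trans (le_of_eq ?_)
        rw [hM]; ring
      exact le_of_mul_le_mul_right h5 h0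
  linarith

lemma ap_step {n : ℕ} (A B : Finset (Fin n → ZMod 2)) (t : ℕ) (ε M : ℝ)
    (g a : Fin t → (Fin n → ZMod 2)) (x : Fin n → ZMod 2) (hx : ∀ i, a i = x + g i)
    (hg : ((apBad A B ε t g).card : ℝ) ≤ M) (ha : ((apBad A B ε t a).card : ℝ) ≤ M) :
    ((Finset.univ.filter fun y => 2 * ε < |rhoMeas A B y - rhoMeas A B (y + x)|).card : ℝ)
      ≤ 2 * M := by
  have hsub : (Finset.univ.filter fun y => 2 * ε < |rhoMeas A B y - rhoMeas A B (y + x)|) ⊆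
      apBad A B ε t a ∪ (apBad A B ε t g).image (fun y => y - x) := by
    intro y hy
    rw [Finset.mem_filter] at hy
    by_contra hcon
    rw [Finset.mem_union, not_or] at hcon
    obtain ⟨h1, h2⟩ := hcon
    have h2' : y + x ∉ apBad A B ε t g := fun h =>
      h2 (Finset.mem_image.2 ⟨y + x, h, by simp⟩)
    simp only [apBad, Finset.mem_filter, Finset.mem_univ, true_and, not_lt] at h1 h2'
    simp only [hx, ← add_assoc] at h1
    have h3 := hy.2
    rw [abs_le] at h1 h2'
    rcases lt_abs.1 h3 with h | h <;> linarith [h1.1, h1.2, h2'.1, h2'.2]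
  have h3 := (Finset.card_le_card hsub).trans (Finset.card_union_le _ _)
  have h4 := Finset.card_image_le (s := apBad A B ε t g) (f := fun y => y - x)
  have h5 : ((Finset.univ.filter fun y =>
      2 * ε < |rhoMeas A B y - rhoMeas A B (y + x)|).card : ℝ) ≤
      (apBad A B ε t a).card + (apBad A B ε t g).card := by
    exact_mod_cast h3.trans (Nat.add_le_add_left h4 _)
  linarith

lemma ap_iter {n : ℕ} (r : (Fin n → ZMod 2) → ℝ) (X : Finset (Fin n → ZMod 2)) (ε M : ℝ)
    (h : ∀ x ∈ X, ((Finset.univ.filter fun y => 2 * ε < |r y - r (y + x)|).card : ℝ) ≤ M)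
    (l : ℕ) (x : Fin l → (Fin n → ZMod 2)) (hx : ∀ i, x i ∈ X) :
    ((Finset.univ.filter fun y => 2 * ε * l < |r y - r (y + ∑ i, x i)|).card : ℝ) ≤ l * M := by
  induction l with
  | zero => simp
  | succ l ih =>
    have h1 := ih (fun i => x i.castSucc) (fun i => hx _)
    have h2 := h (x (Fin.last l)) (hx _)
    rw [Fin.sum_univ_castSucc]
    set z := ∑ i : Fin l, x i.castSucc
    set w := x (Fin.last l)
    set D1 := Finset.univ.filter fun y => 2 * ε * l < |r y - r (y + z)| with hD1
    set D2 := Finset.univ.filter fun y => 2 * ε < |r y - r (y + w)| with hD2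
    have hsub : (Finset.univ.filter fun y =>
        2 * ε * (l + 1 : ℕ) < |r y - r (y + (z + w))|) ⊆ D1 ∪ D2.image (fun y => y - z) := by
      intro y hy
      rw [Finset.mem_filter] at hy
      by_contra hcon
      rw [Finset.mem_union, not_or] at hcon
      obtain ⟨h1, h2⟩ := hcon
      have h2' : y + z ∉ D2 := fun h => h2 (Finset.mem_image.2 ⟨y + z, h, by simp⟩)
      simp only [hD1, hD2, Finset.mem_filter, Finset.mem_univ, true_and, not_lt] at h1 h2'
      have h3 := hy.2
      have h4 := abs_sub_le (r y) (r (y + z)) (r (y + z + w))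
      rw [← add_assoc] at h3
      push_cast at h3
      linarith
    have h3 := (Finset.card_le_card hsub).trans (Finset.card_union_le _ _)
    have h4 := Finset.card_image_le (s := D2) (f := fun y => y - z)
    have h5 : ((Finset.univ.filter fun y =>
        2 * ε * (l + 1 : ℕ) < |r y - r (y + (z + w))|).card : ℝ) ≤ D1.card + D2.card := by
      exact_mod_cast h3.trans (Nat.add_le_add_left h4 _)
    push_cast at h5 ⊢
    linarith

lemma ap_pr {n : ℕ} (S : Finset (Fin n → ZMod 2)) (hS : S.Nonempty)
    (u : (Fin n → ZMod 2) → ℝ) (d M : ℝ)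
    (h : ((Finset.univ.filter fun y => d < u y).card : ℝ) ≤ M) :
    1 - M / S.card ≤ prOver S (fun y => u y ≤ d) := by
  have hc : (0:ℝ) < S.card := by exact_mod_cast hS.card_pos
  unfold prOver
  rw [le_div_iff₀ hc, sub_mul, div_mul_cancel₀ _ hc.ne', one_mul]
  have h1 := Finset.card_filter_add_card_filter_not (s := S) (fun y => u y ≤ d)
  have h2 : (S.filter fun y => ¬ u y ≤ d).card ≤ (Finset.univ.filter fun y => d < u y).card := by
    apply Finset.card_le_card
    intro y hy
    rw [Finset.mem_filter] at hy ⊢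
    exact ⟨Finset.mem_univ _, not_le.1 hy.2⟩
  have h1' : ((S.filter fun y => u y ≤ d).card : ℝ) + (S.filter fun y => ¬ u y ≤ d).card
    = S.card := by exact_mod_cast h1
  have h2' : ((S.filter fun y => ¬ u y ≤ d).card : ℝ) ≤
    (Finset.univ.filter fun y => d < u y).card := by exact_mod_cast h2
  linarith

lemma ap_pigeon {n : ℕ} (K : ℝ) (hK : 1 ≤ K) (A : Finset (Fin n → ZMod 2)) (hA : A.Nonempty)
    (hdoub : ((A + A).card : ℝ) ≤ K * A.card) (m : ℕ)
    (G : Finset (Fin (m + 1) → (Fin n → ZMod 2)))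
    (hG : ∀ a ∈ G, ∀ i, a i ∈ A) (hGc : (A.card : ℝ) ^ (m + 1) / 2 ≤ G.card) :
    ∃ g ∈ G, ∃ X : Finset (Fin n → ZMod 2), (X ⊆ A.image (fun a => -g 0 + a)) ∧
      (A.card : ℝ) / (2 * K ^ m) ≤ X.card ∧
      ∀ x ∈ X, ∃ a ∈ G, ∀ i, a i = x + g i := by
  have hc : (0:ℝ) < A.card := by exact_mod_cast hA.card_pos
  have hK0 : 0 < K := by linarith
  let φ : (Fin (m + 1) → (Fin n → ZMod 2)) → (Fin m → (Fin n → ZMod 2)) :=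
    fun a i => a 0 + a i.succ
  have hmap : ∀ a ∈ G, φ a ∈ Fintype.piFinset (fun _ : Fin m => A + A) := by
    intro a ha
    rw [Fintype.mem_piFinset]
    exact fun i => Finset.add_mem_add (hG a ha _) (hG a ha _)
  have hne : (Fintype.piFinset (fun _ : Fin m => A + A)).Nonempty := by
    rw [Fintype.piFinset_nonempty]
    exact fun _ => hA.add hA
  have hcard : (Fintype.piFinset (fun _ : Fin m => A + A)).card • ((A.card : ℝ) / (2 * K ^ m))
      ≤ G.card := by
    refine le_trans ?_ hGc
    rw [Fintype.card_piFinset, Finset.prod_const, Finset.card_univ, Fintype.card_fin,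
      nsmul_eq_mul, Nat.cast_pow]
    have h1 : ((A + A).card : ℝ) ^ m ≤ (K * A.card) ^ m :=
      pow_le_pow_left₀ (Nat.cast_nonneg _) hdoub m
    refine (mul_le_mul_of_nonneg_right h1 (by positivity)).trans (le_of_eq ?_)
    rw [mul_pow, pow_succ]
    field_simp
  obtain ⟨y, _, hy⟩ := Finset.exists_le_card_fiber_of_nsmul_le_card_of_maps_to hmap hne hcard
  set W := G.filter fun a => φ a = y with hW
  have hWpos : 0 < W.card := by
    have : (0:ℝ) < W.card := lt_of_lt_of_le (by positivity) hy
    exact_mod_cast this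
  obtain ⟨g, hg⟩ := Finset.card_pos.1 hWpos
  have hgG := (Finset.mem_filter.1 hg).1
  have hrel : ∀ a ∈ W, ∀ i, a i = (-g 0 + a 0) + g i := by
    intro a ha i
    have h1 : φ a = φ g := (Finset.mem_filter.1 ha).2.trans (Finset.mem_filter.1 hg).2.symm
    refine Fin.cases (by abel) (fun j => ?_) i
    have h2 : a 0 + a j.succ = g 0 + g j.succ := congrFun h1 j
    have h3 : a j.succ = -a 0 + (g 0 + g j.succ) := by rw [← h2]; abel
    have h4 : -a 0 = a 0 := neg_eq_of_add_eq_zero_left (ap_char _)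
    have h5 : -g 0 = g 0 := neg_eq_of_add_eq_zero_left (ap_char _)
    rw [h3, h4, h5]
    abel
  refine ⟨g, hgG, W.image (fun a => -g 0 + a 0), ?_, ?_, ?_⟩
  · intro x hx
    obtain ⟨a, ha, rfl⟩ := Finset.mem_image.1 hx
    exact Finset.mem_image.2 ⟨a 0, hG a (Finset.mem_filter.1 ha).1 0, rfl⟩
  · rw [Finset.card_image_of_injOn]
    · exact hy
    · intro a ha b hb hab
      funext i
      have hab' : -g 0 + a 0 = -g 0 + b 0 := hab
      rw [hrel a ha i, hrel b hb i, hab']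
  · intro x hx
    obtain ⟨a, ha, rfl⟩ := Finset.mem_image.1 hx
    exact ⟨a, (Finset.mem_filter.1 ha).1, hrel a ha⟩

theorem almost_periodicity_of_sumsets_iterated {n : ℕ} (K : ℝ) (hK : 1 ≤ K)
    (A : Finset (Fin n → ZMod 2)) (hA : A.Nonempty)
    (hdoub : ((A + A).card : ℝ) ≤ K * A.card)
    (ε : ℝ) (hε : 0 < ε) (t : ℕ) (ht : 0 < t) (B : Finset (Fin n → ZMod 2)) :
    ∃ X : Finset (Fin n → ZMod 2),
      (∃ c : Fin n → ZMod 2, X ⊆ A.image (fun a => c + a)) ∧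
      (A.card : ℝ) / (2 * K ^ (t - 1)) ≤ X.card ∧
      ∀ ℓ : ℕ, 0 < ℓ → ∀ x : Fin ℓ → (Fin n → ZMod 2), (∀ i, x i ∈ X) →
        ∀ S : Finset (Fin n → ZMod 2), S.Nonempty →
          1 - 8 * ℓ * (((A + B).card : ℝ) / S.card) * Real.exp (-2 * ε ^ 2 * t) ≤
            prOver S (fun y =>
              |rhoMeas A B y - rhoMeas A B (y + ∑ i, x i)| ≤ 2 * ε * ℓ) := by
  obtain ⟨m, rfl⟩ : ∃ m, t = m + 1 := ⟨t - 1, by omega⟩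
  obtain ⟨g, hg, X, hX1, hX2, hX3⟩ := ap_pigeon K hK A hA hdoub m _
    (fun a ha => Fintype.mem_piFinset.1 (Finset.mem_filter.1 ha).1)
    (ap_good A B hA (m + 1) ht ε hε)
  refine ⟨X, ⟨-g 0, hX1⟩, by simpa using hX2, ?_⟩
  intro l _ x hx S hS
  have h1 := ap_iter (rhoMeas A B) X ε _ (fun x hx => by
    obtain ⟨a, ha, hag⟩ := hX3 x hx
    exact ap_step A B (m + 1) ε _ g a x hag (Finset.mem_filter.1 hg).2
      (Finset.mem_filter.1 ha).2) l x hx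
  refine le_trans (le_of_eq ?_) (ap_pr S hS _ _ _ h1)
  ring
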